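/- Assume the growth conditions (GC) and the compactness-continuity conditions (CC). Let g₀ be a measurable selector, v₀ := V_{g₀}, and g₁ a measurable selector with T(v₀^e) = T_{g₁}(v₀^e). If V_{g₁} = v₀^e, then V_{g₁} = v*, the unique lower semicontinuous function of finite W-norm satisfying v* = T v*; hence g₁ is an optimal stationary policy. -/

import Mathlib

open MeasureTheory ProbabilityTheory Filter Topology
open scoped ENNReal

/-- The weighted norm `‖u‖_W = sup_x |u x| / W x`, valued in `ℝ≥0∞`. -/
noncomputable def WNorm {X : Type*} (W u : X → ℝ) : ℝ≥0∞ :=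
  ⨆ x, ENNReal.ofReal (|u x| / W x)

/-- The dynamic programming (Bellman) operator
`Tu(x) = inf_{a ∈ A(x)} [C(x,a) + α ∫ u dQ(·|x,a)]`. -/
noncomputable def Tbell {X A : Type*} [MeasurableSpace X] [MeasurableSpace A]
    (Adm : X → Set A) (Q : Kernel (X × A) X) (C : X × A → ℝ) (α : ℝ)
    (u : X → ℝ) (x : X) : ℝ :=
  sInf ((fun a => C (x, a) + α * ∫ y, u y ∂(Q (x, a))) '' Adm x)

/-- The lower semicontinuous envelope of `u : X → ℝ`, computed in the extended
reals: `uᵉ(x) = sup_{r>0} inf_{y ∈ B_r(x)} u(y)`. -/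
noncomputable def lscEnvE {X : Type*} [MetricSpace X] (u : X → ℝ) (x : X) : EReal :=
  ⨆ r ∈ Set.Ioi (0 : ℝ), ⨅ y ∈ Metric.ball x r, (u y : EReal)

theorem wnorm_bound {X : Type*} {W u : X → ℝ} (hW1 : ∀ x, 1 ≤ W x) (h : WNorm W u < ⊤) :
    ∃ N : ℝ, 0 ≤ N ∧ ∀ x, |u x| ≤ N * W x := by
  refine ⟨(WNorm W u).toReal, ENNReal.toReal_nonneg, fun x => ?_⟩
  have hx : ENNReal.ofReal (|u x| / W x) ≤ WNorm W u :=
    le_iSup (fun x => ENNReal.ofReal (|u x| / W x)) x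
  have h0 : 0 < W x := lt_of_lt_of_le one_pos (hW1 x)
  have h2 := (ENNReal.ofReal_le_iff_le_toReal h.ne).1 hx
  exact (div_le_iff₀ h0).1 h2

theorem bellman_step {X A : Type*} [MeasurableSpace X] [MeasurableSpace A]
    (Adm : X → Set A) (hAne : ∀ x, (Adm x).Nonempty)
    (Q : Kernel (X × A) X) (C : X × A → ℝ) (α : ℝ) (hα0 : 0 < α)
    (M β : ℝ) (W : X → ℝ)
    (hCW : ∀ x, ∀ a ∈ Adm x, |C (x, a)| ≤ M * W x)
    (hWint : ∀ x, ∀ a ∈ Adm x, Integrable W (Q (x, a)))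
    (hQW : ∀ x, ∀ a ∈ Adm x, ∫ y, W y ∂(Q (x, a)) ≤ β * W x)
    (u w : X → ℝ) (hu : Measurable u) (hw : Measurable w)
    (N K : ℝ) (hN0 : 0 ≤ N) (hN : ∀ x, |u x| ≤ N * W x) (hK : ∀ x, |w x| ≤ K * W x)
    (c : ℝ) (hc : 0 ≤ c) (huw : ∀ x, u x ≤ w x + c * W x) (x : X) :
    Tbell Adm Q C α u x ≤ Tbell Adm Q C α w x + α * β * c * W x := by
  have hui : ∀ a ∈ Adm x, Integrable u (Q (x, a)) := fun a ha =>
    ((hWint x a ha).const_mul N).mono' hu.aestronglyMeasurable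
      (Eventually.of_forall fun y => by simpa using hN y)
  have hwi : ∀ a ∈ Adm x, Integrable w (Q (x, a)) := fun a ha =>
    ((hWint x a ha).const_mul K).mono' hw.aestronglyMeasurable
      (Eventually.of_forall fun y => by simpa using hK y)
  rw [← sub_le_iff_le_add]
  refine le_csInf ((hAne x).image _) ?_
  rintro _ ⟨a, ha, rfl⟩
  have hbdd : BddBelow ((fun a => C (x, a) + α * ∫ y, u y ∂(Q (x, a))) '' Adm x) := by
    refine ⟨-(M * W x) - α * (N * (β * W x)), ?_⟩
    rintro _ ⟨b, hb, rfl⟩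
    have h1 := (abs_le.1 (hCW x b hb)).1
    have h2 : -(N * ∫ y, W y ∂(Q (x, b))) ≤ ∫ y, u y ∂(Q (x, b)) := by
      rw [← integral_const_mul, ← integral_neg]
      exact integral_mono ((hWint x b hb).const_mul N).neg (hui b hb)
        (fun y => (abs_le.1 (hN y)).1)
    have h3 := mul_le_mul_of_nonneg_left (hQW x b hb) hN0
    have h4 : -(N * (β * W x)) ≤ ∫ y, u y ∂(Q (x, b)) := by linarith
    have h5 := mul_le_mul_of_nonneg_left h4 hα0.le
    simp only
    linarith
  have h1 : Tbell Adm Q C α u x ≤ C (x, a) + α * ∫ y, u y ∂(Q (x, a)) :=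
    csInf_le hbdd ⟨a, ha, rfl⟩
  have h2 : ∫ y, u y ∂(Q (x, a)) ≤ ∫ y, w y ∂(Q (x, a)) + c * ∫ y, W y ∂(Q (x, a)) := by
    rw [← integral_const_mul, ← integral_add (hwi a ha) ((hWint x a ha).const_mul c)]
    exact integral_mono (hui a ha) ((hwi a ha).add ((hWint x a ha).const_mul c)) huw
  have h3 := mul_le_mul_of_nonneg_left (hQW x a ha) hc
  have h4 := mul_le_mul_of_nonneg_left (h2.trans (add_le_add_right h3 _)) hα0.le
  simp only
  linarith

theorem bellman_le {X A : Type*} [MeasurableSpace X] [MeasurableSpace A]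
    (Adm : X → Set A) (hAne : ∀ x, (Adm x).Nonempty)
    (Q : Kernel (X × A) X) (C : X × A → ℝ) (α : ℝ) (hα0 : 0 < α)
    (M β : ℝ) (hβ : 1 < β) (hγ : α * β < 1) (W : X → ℝ)
    (hCW : ∀ x, ∀ a ∈ Adm x, |C (x, a)| ≤ M * W x)
    (hWint : ∀ x, ∀ a ∈ Adm x, Integrable W (Q (x, a)))
    (hQW : ∀ x, ∀ a ∈ Adm x, ∫ y, W y ∂(Q (x, a)) ≤ β * W x)
    (u w : X → ℝ) (hu : Measurable u) (hw : Measurable w)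
    (N K : ℝ) (hN0 : 0 ≤ N) (hK0 : 0 ≤ K)
    (hN : ∀ x, |u x| ≤ N * W x) (hK : ∀ x, |w x| ≤ K * W x)
    (hfu : ∀ x, u x = Tbell Adm Q C α u x) (hfw : ∀ x, w x = Tbell Adm Q C α w x)
    (x : X) : u x ≤ w x := by
  have hγ0 : 0 ≤ α * β := by positivity
  have key : ∀ n : ℕ, ∀ x, u x ≤ w x + (α * β) ^ n * (N + K) * W x := by
    intro n
    induction n with
    | zero =>
      intro x
      have h1 := (abs_le.1 (hN x)).2
      have h2 := (abs_le.1 (hK x)).1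
      simp only [pow_zero]
      linarith
    | succ n ih =>
      intro x
      have h := bellman_step Adm hAne Q C α hα0 M β W hCW hWint hQW u w hu hw N K hN0 hN hK
        ((α * β) ^ n * (N + K)) (by positivity) ih x
      rw [← hfu, ← hfw] at h
      refine h.trans (le_of_eq ?_)
      ring
  have ht : Tendsto (fun n : ℕ => w x + (α * β) ^ n * (N + K) * W x) atTop (𝓝 (w x)) := by
    have h := tendsto_pow_atTop_nhds_zero_of_lt_one hγ0 hγ
    have h' := (((h.mul_const (N + K)).mul_const (W x)).const_add (w x))
    simpa using h'
  exact ge_of_tendsto' ht (fun n => key n x)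

/-- Under (GC) and (CC), if the improvement policy `g₁` (with
`T(v₀ᵉ) = T_{g₁}(v₀ᵉ)`) satisfies `V_{g₁} = v₀ᵉ`, then `V_{g₁}` equals the
unique lower semicontinuous fixed point `v*` of `T` of finite `W`-norm, so `g₁`
is optimal (Lemma 1(d) of the paper). -/
theorem policy_improvement_fixed_implies_optimal {X A : Type*}
    [MetricSpace X] [PolishSpace X] [MeasurableSpace X] [BorelSpace X]
    [MetricSpace A] [PolishSpace A] [MeasurableSpace A] [BorelSpace A]
    (Adm : X → Set A) (hAne : ∀ x, (Adm x).Nonempty)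
    (hKmeas : MeasurableSet {p : X × A | p.2 ∈ Adm p.1})
    (Q : Kernel (X × A) X) [IsMarkovKernel Q]
    (C : X × A → ℝ) (hCmeas : Measurable C)
    (α : ℝ) (hα0 : 0 < α) (hα1 : α < 1)
    (M β : ℝ) (hM : 0 < M) (hβ : 1 < β)
    (W : X → ℝ) (hWmeas : Measurable W) (hW1 : ∀ x, 1 ≤ W x)
    (hCW : ∀ x, ∀ a ∈ Adm x, |C (x, a)| ≤ M * W x)
    (hQW : ∀ x, ∀ a ∈ Adm x,
      ∫⁻ y, ENNReal.ofReal (W y) ∂(Q (x, a)) ≤ ENNReal.ofReal (β * W x))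
    (hγ : α * β < 1)
    (hAcomp : ∀ x, IsCompact (Adm x))
    (hAusc : ∀ x, ∀ U : Set A, IsOpen U → Adm x ⊆ U → ∀ᶠ x' in 𝓝 x, Adm x' ⊆ U)
    (hClsc : LowerSemicontinuousOn C {p : X × A | p.2 ∈ Adm p.1})
    (hQweak : ∀ g : X → ℝ, Continuous g → (∃ b, ∀ y, |g y| ≤ b) →
      ContinuousOn (fun p : X × A => ∫ y, g y ∂(Q p)) {p : X × A | p.2 ∈ Adm p.1})
    (hWcont : Continuous W)
    (hQWcont : ContinuousOn (fun p : X × A => ∫ y, W y ∂(Q p))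
      {p : X × A | p.2 ∈ Adm p.1})
    (g₀ : X → A) (hg₀ : Measurable g₀) (hg₀sel : ∀ x, g₀ x ∈ Adm x)
    (v₀ : X → ℝ) (hv₀meas : Measurable v₀) (hv₀W : WNorm W v₀ < ⊤)
    (hv₀fix : ∀ x, v₀ x = C (x, g₀ x) + α * ∫ y, v₀ y ∂(Q (x, g₀ x)))
    (e : X → ℝ) (hE : ∀ x, (e x : EReal) = lscEnvE v₀ x)
    (g₁ : X → A) (hg₁ : Measurable g₁) (hg₁sel : ∀ x, g₁ x ∈ Adm x)
    (hg₁imp : ∀ x, Tbell Adm Q C α e x = C (x, g₁ x) + α * ∫ y, e y ∂(Q (x, g₁ x)))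
    (v₁ : X → ℝ) (hv₁meas : Measurable v₁) (hv₁W : WNorm W v₁ < ⊤)
    (hv₁fix : ∀ x, v₁ x = C (x, g₁ x) + α * ∫ y, v₁ y ∂(Q (x, g₁ x)))
    (vstar : X → ℝ) (hvstarlsc : LowerSemicontinuous vstar)
    (hvstarW : WNorm W vstar < ⊤)
    (hvstarfix : ∀ x, vstar x = Tbell Adm Q C α vstar x)
    (heq : v₁ = e) :
    v₁ = vstar := by
  have hW0 : ∀ x, 0 ≤ W x := fun x => zero_le_one.trans (hW1 x)
  have hWint : ∀ x, ∀ a ∈ Adm x, Integrable W (Q (x, a)) := by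
    intro x a ha
    refine ⟨hWmeas.aestronglyMeasurable, ?_⟩
    rw [hasFiniteIntegral_iff_ofReal (Eventually.of_forall hW0)]
    exact (hQW x a ha).trans_lt ENNReal.ofReal_lt_top
  have hQW' : ∀ x, ∀ a ∈ Adm x, ∫ y, W y ∂(Q (x, a)) ≤ β * W x := by
    intro x a ha
    rw [integral_eq_lintegral_of_nonneg_ae (Eventually.of_forall hW0)
      hWmeas.aestronglyMeasurable]
    exact ENNReal.toReal_le_of_le_ofReal (mul_nonneg (by linarith) (hW0 x)) (hQW x a ha)
  obtain ⟨N, hN0, hN⟩ := wnorm_bound hW1 hv₁W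
  obtain ⟨K, hK0, hK⟩ := wnorm_bound hW1 hvstarW
  have hfix : ∀ x, v₁ x = Tbell Adm Q C α v₁ x := by
    intro x
    have h := hg₁imp x
    rw [← heq] at h
    rw [h]
    exact hv₁fix x
  have hsm : Measurable vstar := hvstarlsc.measurable
  funext x
  exact le_antisymm
    (bellman_le Adm hAne Q C α hα0 M β hβ hγ W hCW hWint hQW' v₁ vstar hv₁meas hsm N K hN0 hK0
      hN hK hfix hvstarfix x)
    (bellman_le Adm hAne Q C α hα0 M β hβ hγ W hCW hWint hQW' vstar v₁ hsm hv₁meas K N hK0 hN0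
      hK hN hvstarfix hfix x)
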